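/- arXiv:1504.02598 — 2 statements merged into one kernel-verified Lean document; each statement's English description precedes it below -/
import Mathlib

section
/- Let n and q be integers with n ≥ 2 and q ≥ 2. Then Φ*_n(q) equals the largest divisor m of q^n − 1 such that gcd(m, q^d − 1) = 1 for every divisor d of n with d < n. -/
/-- `Phi n q` is the `n`-th cyclotomic polynomial evaluated at `q`. -/
noncomputable def Phi (n q : ℕ) : ℕ :=
  ((Polynomial.cyclotomic n ℤ).eval (q : ℤ)).toNat

/-- `PhiStar n q` is the largest divisor of `Phi n q` that is coprime to
`∏_{k=1}^{n-1} (q^k - 1)` (an empty product is `1`). -/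
noncomputable def PhiStar (n q : ℕ) : ℕ :=
  sSup {m : ℕ | m ∣ Phi n q ∧ Nat.Coprime m (∏ k ∈ Finset.Ico 1 n, (q ^ k - 1))}

theorem Phi_cast (n q : ℕ) (hq : 2 ≤ q) :
    ((Phi n q : ℕ) : ℤ) = (Polynomial.cyclotomic n ℤ).eval (q : ℤ) := by
  unfold Phi
  apply Int.toNat_of_nonneg
  exact (Polynomial.cyclotomic_pos' n (by exact_mod_cast hq)).le

theorem prod_Phi (n q : ℕ) (hn : 0 < n) (hq : 2 ≤ q) :
    Phi n q * ∏ d ∈ n.properDivisors, Phi d q = q ^ n - 1 := by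
  have h := congrArg (Polynomial.eval (q : ℤ)) (Polynomial.prod_cyclotomic_eq_X_pow_sub_one hn ℤ)
  rw [← Nat.cons_self_properDivisors hn.ne', Finset.prod_cons] at h
  simp only [Polynomial.eval_mul, Polynomial.eval_prod, Polynomial.eval_sub, Polynomial.eval_pow,
    Polynomial.eval_X, Polynomial.eval_one, ← Phi_cast _ q hq] at h
  have h1 : 1 ≤ q ^ n := Nat.one_le_pow _ _ (by omega)
  zify [h1]
  exact h

theorem Phi_dvd (n q : ℕ) (hn : 0 < n) (hq : 2 ≤ q) : Phi n q ∣ q ^ n - 1 :=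
  ⟨_, (prod_Phi n q hn hq).symm⟩

theorem sets_eq (n q : ℕ) (hn : 2 ≤ n) (hq : 2 ≤ q) :
    {m : ℕ | m ∣ Phi n q ∧ Nat.Coprime m (∏ k ∈ Finset.Ico 1 n, (q ^ k - 1))} =
    {m : ℕ | m ∣ q ^ n - 1 ∧ ∀ d : ℕ, d ∣ n → d < n → Nat.Coprime m (q ^ d - 1)} := by
  ext m
  simp only [Set.mem_ofPred_eq]
  constructor
  · rintro ⟨h1, h2⟩
    refine ⟨h1.trans (Phi_dvd n q (by omega) hq), fun d hd hdn => ?_⟩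
    have hd0 : 0 < d := Nat.pos_of_dvd_of_pos hd (by omega)
    exact Nat.Coprime.coprime_dvd_right
      (Finset.dvd_prod_of_mem (fun k => q ^ k - 1) (Finset.mem_Ico.2 ⟨hd0, hdn⟩)) h2
  · rintro ⟨h1, h2⟩
    constructor
    · rw [← prod_Phi n q (by omega) hq] at h1
      refine Nat.Coprime.dvd_of_dvd_mul_right (Nat.Coprime.prod_right fun d hd => ?_) h1
      rw [Nat.mem_properDivisors] at hd
      have hd0 : 0 < d := Nat.pos_of_dvd_of_pos hd.1 (by omega)
      exact Nat.Coprime.coprime_dvd_right (Phi_dvd d q hd0 hq) (h2 d hd.1 hd.2)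
    · refine Nat.Coprime.prod_right fun k hk => ?_
      rw [Finset.mem_Ico] at hk
      have hlt : Nat.gcd n k < n := (Nat.gcd_le_right n (by omega)).trans_lt hk.2
      have h3 := h2 _ (Nat.gcd_dvd_left n k) hlt
      rw [← Nat.pow_sub_one_gcd_pow_sub_one] at h3
      refine Nat.eq_one_of_dvd_coprimes h3 (Nat.gcd_dvd_left _ _) ?_
      exact Nat.dvd_gcd ((Nat.gcd_dvd_left _ _).trans h1) (Nat.gcd_dvd_right _ _)

/-- `Φ*_n(q)` is the largest divisor `m` of `q^n − 1` with `gcd(m, q^d − 1) = 1`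
for every divisor `d` of `n` with `d < n`. -/
theorem phiStar_isGreatest (n q : ℕ) (hn : 2 ≤ n) (hq : 2 ≤ q) :
    IsGreatest {m : ℕ | m ∣ q ^ n - 1 ∧
        ∀ d : ℕ, d ∣ n → d < n → Nat.Coprime m (q ^ d - 1)}
      (PhiStar n q) := by
  have hpos : 0 < q ^ n - 1 := by
    have := Nat.one_lt_pow (show n ≠ 0 by omega) (show 1 < q by omega)
    omega
  have hb : BddAbove {m : ℕ | m ∣ q ^ n - 1 ∧
      ∀ d : ℕ, d ∣ n → d < n → Nat.Coprime m (q ^ d - 1)} :=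
    ⟨q ^ n - 1, fun m hm => Nat.le_of_dvd hpos hm.1⟩
  unfold PhiStar
  rw [sets_eq n q hn hq]
  exact ⟨Nat.sSup_mem ⟨1, one_dvd _, fun d _ _ => Nat.coprime_one_left _⟩ hb,
    fun m hm => le_csSup hb hm⟩
end

section
/- For all real constants c > 0 and k > 0, the set of pairs of integers (n, q) with n ≥ 3, q ≥ 2 and Φ*_n(q) ≤ c·n^k is finite. -/
open Polynomial

lemma tot_odd (n : ℕ) (hn : Odd n) : n ≤ n.totient ^ 2 := by
  induction n using Nat.recOnPosPrimePosCoprime with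
  | zero => simp
  | one => simp
  | prime_pow p a hp ha =>
    have h3 : 3 ≤ p := by
      rcases hp.eq_two_or_odd' with h | h
      · subst h
        exact absurd hn (by simp [Nat.odd_pow_iff, ha.ne'])
      · have := hp.two_le
        rcases h with ⟨t, rfl⟩; omega
    obtain ⟨b, rfl⟩ : ∃ b, a = b + 1 := ⟨a - 1, by omega⟩
    rw [Nat.totient_prime_pow_succ hp]
    obtain ⟨r, rfl⟩ : ∃ r, p = r + 3 := ⟨p - 3, by omega⟩
    have h1 : 1 ≤ (r + 3) ^ b := Nat.one_le_pow _ _ (by omega)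
    have : r + 3 - 1 = r + 2 := by omega
    rw [this, mul_pow, pow_succ]
    apply Nat.mul_le_mul
    · nlinarith
    · nlinarith
  | coprime a b ha hb hab iha ihb =>
    rw [Nat.totient_mul hab, mul_pow]
    rw [Nat.odd_mul] at hn
    exact Nat.mul_le_mul (iha hn.1) (ihb hn.2)

lemma tot_bound (n : ℕ) : n ≤ 2 * n.totient ^ 2 := by
  rcases Nat.eq_zero_or_pos n with rfl | hpos
  · simp
  obtain ⟨a, m, hm, rfl⟩ := Nat.exists_eq_two_pow_mul_odd hpos.ne'
  have h := tot_odd m hm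
  rw [Nat.totient_mul (Nat.Coprime.pow_left _ (Nat.coprime_two_left.2 hm)), mul_pow]
  rcases a with _ | b
  · simp; omega
  · rw [Nat.totient_prime_pow_succ Nat.prime_two]
    have h1 : 1 ≤ 2 ^ b := Nat.one_le_pow _ _ (by omega)
    have : 2 ^ (b+1) ≤ 2 * (2 ^ b * (2-1))^2 := by
      rw [pow_succ]; norm_num; nlinarith
    calc _ ≤ _ := Nat.mul_le_mul this h
      _ = _ := by ring

lemma exp_poly (C : ℝ) (M : ℕ) : ∃ B : ℕ, ∀ s : ℕ, (2:ℝ) ^ s ≤ C * (s:ℝ) ^ M → s ≤ B := by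
  have h := (tendsto_pow_const_div_const_pow_of_one_lt M (r := (2:ℝ)) (by norm_num)).const_mul C
  rw [mul_zero] at h
  have h2 := h.eventually (gt_mem_nhds (zero_lt_one))
  obtain ⟨B, hB⟩ := Filter.eventually_atTop.1 h2
  refine ⟨B, fun s hs => ?_⟩
  by_contra hlt
  have := hB s (by omega)
  rw [← mul_div_assoc, div_lt_one (by positivity)] at this
  linarith

lemma lower (n q : ℕ) (hn : 3 ≤ n) (hq : 2 ≤ q) :
    (q:ℝ) ^ n.totient ≤ ((cyclotomic n ℝ).eval (q:ℝ)) ^ 2 := by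
  have hq' : (2:ℝ) ≤ q := by exact_mod_cast hq
  -- choose p
  obtain ⟨p, m, hp, rfl, hpm⟩ : ∃ p m, p.Prime ∧ n = m * p ∧ (p ∣ m ∨ 3 ≤ p) := by
    by_cases h : ∃ p, p.Prime ∧ p ∣ n ∧ 3 ≤ p
    · obtain ⟨p, hp, ⟨m, rfl⟩, h3⟩ := h
      exact ⟨p, m, hp, mul_comm _ _, Or.inr h3⟩
    · push Not at h
      obtain ⟨a, m, hm, rfl⟩ := Nat.exists_eq_two_pow_mul_odd (n := n) (by omega)
      have hm1 : m = 1 := by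
        by_contra hne
        obtain ⟨p, hp, hpd⟩ := Nat.exists_prime_and_dvd hne
        have := h p hp (hpd.mul_left _)
        have h2 := hp.two_le
        have : p = 2 := by omega
        subst this
        rcases hm with ⟨t, rfl⟩
        omega
      subst hm1
      rcases a with _ | _ | b
      · norm_num at hn
      · norm_num at hn
      · exact ⟨2, 2^(b+1), Nat.prime_two, by ring, Or.inl ⟨2^b, by ring⟩⟩
  have hmpos : 0 < m := by
    rcases Nat.eq_zero_or_pos m with rfl | h
    · simp at hn
    · exact h
  have hp2 := hp.two_le
  have hqp : (1:ℝ) < (q:ℝ)^p := one_lt_pow₀ (by linarith) hp.ne_zero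
  have hlow := sub_one_pow_totient_le_cyclotomic_eval (n := m) hqp
  have hexp : (expand ℝ p (cyclotomic m ℝ)).eval (q:ℝ) = (cyclotomic m ℝ).eval ((q:ℝ)^p) := by
    simp [expand_eval]
  by_cases hd : p ∣ m
  · rw [cyclotomic_expand_eq_cyclotomic hp hd] at hexp
    rw [hexp, mul_comm m p, Nat.totient_mul_of_prime_of_dvd hp hd, pow_mul]
    have h1 : (q:ℝ)^p ≤ ((q:ℝ)^p-1)^2 := by
      have : (4:ℝ) ≤ (q:ℝ)^p := by
        calc (4:ℝ) = 2^2 := by norm_num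
          _ ≤ (q:ℝ)^2 := by gcongr
          _ ≤ (q:ℝ)^p := pow_le_pow_right₀ (by linarith) hp2
      nlinarith
    calc ((q:ℝ)^p)^m.totient ≤ (((q:ℝ)^p-1)^2)^m.totient := by gcongr
      _ = (((q:ℝ)^p-1)^m.totient)^2 := pow_right_comm _ _ _
      _ ≤ _ := by
        have : (0:ℝ) ≤ (q:ℝ)^p-1 := by linarith
        gcongr
  · have h3 : 3 ≤ p := by tauto
    rw [cyclotomic_expand_eq_cyclotomic_mul hp hd, eval_mul] at hexp
    have hup := cyclotomic_eval_le_add_one_pow_totient (q := (q:ℝ)) (by linarith) m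
    have hpos : 0 < (cyclotomic (m*p) ℝ).eval (q:ℝ) := cyclotomic_pos' _ (by linarith)
    have h1 : (q:ℝ)^(p-1) * (q+1)^2 ≤ ((q:ℝ)^p-1)^2 := by
      obtain ⟨r, rfl⟩ : ∃ r, p = r + 3 := ⟨p-3, by omega⟩
      have : r + 3 - 1 = r + 2 := by omega
      rw [this]
      have hr : (1:ℝ) ≤ (q:ℝ)^r := one_le_pow₀ (by linarith)
      set x := (q:ℝ)^r with hx
      rw [pow_add, pow_add, ← hx]
      have e1 : ((q:ℝ)^2 * x + q * x) ≤ x * q^3 - 1 := by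
        have : (1:ℝ) ≤ (q:ℝ)^3 - q^2 - q := by nlinarith [mul_nonneg (sub_nonneg.2 hq') (sub_nonneg.2 hq')]
        nlinarith
      calc x * (q:ℝ)^2 * (q+1)^2 ≤ x*(x * (q:ℝ)^2 * (q+1)^2) := by
            apply le_mul_of_one_le_left (by positivity) hr
        _ = ((q:ℝ)^2 * x + q * x)^2 := by ring
        _ ≤ _ := by gcongr
    have h2 : ((q:ℝ)^(p-1))^m.totient * (((q:ℝ)+1)^m.totient)^2 ≤
        ((cyclotomic (m*p) ℝ).eval (q:ℝ))^2 * (((q:ℝ)+1)^m.totient)^2 := by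
      calc _ = ((q:ℝ)^(p-1) * (q+1)^2)^m.totient := by rw [mul_pow, pow_right_comm _ 2]
        _ ≤ (((q:ℝ)^p-1)^2)^m.totient := by gcongr
        _ = (((q:ℝ)^p-1)^m.totient)^2 := pow_right_comm _ _ _
        _ ≤ (eval ((q:ℝ)^p) (cyclotomic m ℝ))^2 := by
          have : (0:ℝ) ≤ (q:ℝ)^p-1 := by linarith
          gcongr
        _ ≤ (eval (q:ℝ) (cyclotomic (m*p) ℝ) * ((q:ℝ)+1)^m.totient)^2 := by
          rw [← hexp]
          have := cyclotomic_pos' m (R := ℝ) (x := (q:ℝ)) (by linarith)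
          gcongr
        _ = _ := by ring
    have h4 := le_of_mul_le_mul_right h2 (by positivity)
    rw [mul_comm m p, Nat.totient_mul_of_prime_of_not_dvd hp hd, pow_mul, mul_comm p m]
    exact h4

lemma cyc_dvd_geom (n d : ℕ) (q : ℤ) (hq : 2 ≤ q) (hn : 0 < n) (hd : 0 < d) (t : ℕ)
    (ht : 1 < t) (hnd : n = d * t) :
    (cyclotomic n ℤ).eval q ∣ ∑ i ∈ Finset.range t, (q ^ d) ^ i := by
  have hmem : d ∈ n.properDivisors := by
    rw [Nat.mem_properDivisors]
    exact ⟨⟨t, hnd⟩, by nlinarith⟩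
  have h1 := X_pow_sub_one_mul_cyclotomic_dvd_X_pow_sub_one_of_dvd ℤ hmem
  have h2 := eval_dvd (x := q) h1
  simp only [eval_mul, eval_sub, eval_pow, eval_X, eval_one] at h2
  rw [hnd, pow_mul, ← mul_geom_sum (q ^ d) t, ← hnd] at h2
  have h3 : (1:ℤ) < q ^ d := one_lt_pow₀ (by linarith) hd.ne'
  exact Int.dvd_of_mul_dvd_mul_left (by linarith) h2

lemma cyc_dvd_pow (n : ℕ) (q : ℤ) : (cyclotomic n ℤ).eval q ∣ q ^ n - 1 := by
  simpa using eval_dvd (x := q) (cyclotomic.dvd_X_pow_sub_one n ℤ)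

lemma not_sq_dvd (n p : ℕ) (q : ℤ) (hn : 3 ≤ n) (hq : 2 ≤ q) (hp : p.Prime) (hpn : p ∣ n) :
    ¬ (p:ℤ) ^ 2 ∣ (cyclotomic n ℤ).eval q := by
  intro hdvd
  have hpp : Prime (p:ℤ) := Nat.prime_iff_prime_int.1 hp
  have hpd : (p:ℤ) ∣ q ^ n - 1 := (dvd_pow_self _ two_ne_zero).trans (hdvd.trans (cyc_dvd_pow n q))
  have hpq : ¬ (p:ℤ) ∣ q := by
    intro h
    have h1 : (p:ℤ) ∣ q ^ n := dvd_pow h (by omega)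
    have : (p:ℤ) ∣ 1 := by simpa using dvd_sub h1 hpd
    exact hpp.not_isUnit (isUnit_of_dvd_one this)
  obtain ⟨m, hm⟩ := hpn
  rw [mul_comm] at hm
  have hm0 : 0 < m := by
    rcases Nat.eq_zero_or_pos m with rfl | h
    · omega
    · exact h
  have hg := hdvd.trans (cyc_dvd_geom n m q hq (by omega) hm0 p hp.one_lt hm)
  rcases hp.eq_two_or_odd' with rfl | hodd
  · rw [Finset.sum_range_succ, Finset.sum_range_one] at hg
    simp only [pow_zero, pow_one] at hg
    have hqo : q % 2 = 1 := by
      push_cast at hpq; omega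
    rcases Nat.even_or_odd' m with ⟨r, hr | hr⟩
    · rw [hr, mul_comm 2 r, pow_mul] at hg
      have : (q^r) % 2 = 1 := Int.odd_iff.1 ((Int.odd_iff.2 hqo).pow)
      obtain ⟨u, hu⟩ : ∃ u, q^r = 2*u+1 := ⟨q^r/2, by omega⟩
      rw [hu] at hg
      push_cast at hg
      have : (1 + (2*u+1)^2 : ℤ) = 4*(u^2+u)+2 := by ring
      rw [this] at hg
      omega
    · have hg2 := cyc_dvd_geom n 2 q hq (by omega) (by omega) m (by omega) (by omega)
      have h2 := ((dvd_pow_self _ two_ne_zero).trans hdvd).trans hg2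
      have hodd : Odd (∑ i ∈ Finset.range m, (q ^ 2) ^ i) := by
        have hcast : ((∑ i ∈ Finset.range m, (q ^ 2) ^ i : ℤ) : ZMod 2) = 1 := by
          have hq2 : (q : ZMod 2) = 1 := ZMod.intCast_eq_one_iff_odd.2 (Int.odd_iff.2 hqo)
          have hm2 : (m : ZMod 2) = 1 := ZMod.natCast_eq_one_iff_odd.2 ⟨r, hr⟩
          push_cast
          simp [hq2, hm2]
        exact ZMod.intCast_eq_one_iff_odd.1 hcast
      rw [Int.odd_iff] at hodd
      push_cast at h2
      omega
  · have hQ : (p:ℤ) ∣ q^m - 1 := by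
      have := Fact.mk hp
      rw [← ZMod.intCast_zmod_eq_zero_iff_dvd] at hpd ⊢
      rw [hm, pow_mul] at hpd
      push_cast at hpd ⊢
      rwa [ZMod.pow_card] at hpd
    obtain ⟨b, hb⟩ := hQ
    have hb' : q^m = 1 + p * b := by linarith
    have := odd_sq_dvd_geom_sum₂_sub (R := ℤ) (a := 1) (b := b) hodd
    simp only [one_pow, mul_one] at this
    rw [← hb'] at this
    have h1 : (p:ℤ)^2 ∣ p := by simpa using dvd_sub hg this
    have h2 : p^2 ∣ p := by exact_mod_cast h1
    have := Nat.le_of_dvd hp.pos h2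
    have := hp.two_le
    nlinarith

lemma phi_cast (n q : ℕ) (hq : 2 ≤ q) : ((Phi n q : ℕ) : ℤ) = (cyclotomic n ℤ).eval (q:ℤ) := by
  unfold Phi
  rw [Int.toNat_of_nonneg]
  exact cyclotomic_nonneg n (by exact_mod_cast (by omega : 1 ≤ q))

lemma phi_pos (n q : ℕ) (hq : 2 ≤ q) : 0 < Phi n q := by
  have h : (0:ℤ) < (Phi n q : ℕ) := by
    rw [phi_cast n q hq]
    exact cyclotomic_pos' n (by exact_mod_cast (by omega : 1 < q))
  exact_mod_cast h

lemma phi_real (n q : ℕ) (hq : 2 ≤ q) : ((Phi n q : ℕ) : ℝ) = (cyclotomic n ℝ).eval (q:ℝ) := by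
  have h := congrArg (Int.cast : ℤ → ℝ) (phi_cast n q hq)
  rw [← map_cyclotomic_int n ℝ, eval_natCast_map]
  simpa using h

lemma dvd_n (n q k p : ℕ) (hq : 2 ≤ q) (hk : 0 < k) (hkn : k < n) (hp : p.Prime)
    (h1 : p ∣ Phi n q) (h2 : p ∣ q ^ k - 1) : p ∣ n := by
  by_contra hpn
  have := Fact.mk hp
  have : NeZero ((n : ℕ) : ZMod p) := ⟨by rwa [Ne, ZMod.natCast_eq_zero_iff]⟩
  have hroot : IsRoot (cyclotomic n (ZMod p)) (q : ZMod p) := by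
    rw [IsRoot.def, ← map_cyclotomic_int n (ZMod p), eval_natCast_map]
    have : (p:ℤ) ∣ (cyclotomic n ℤ).eval (q:ℤ) := by
      rw [← phi_cast n q hq]; exact_mod_cast h1
    simpa using (ZMod.intCast_zmod_eq_zero_iff_dvd _ p).2 this
  rw [isRoot_cyclotomic_iff] at hroot
  apply hroot.pow_ne_one_of_pos_of_lt hk.ne' hkn
  have h3 := (ZMod.natCast_eq_zero_iff (q^k-1) p).2 h2
  rw [Nat.cast_sub (Nat.one_le_pow _ _ (by omega))] at h3
  push_cast at h3
  exact sub_eq_zero.1 h3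

lemma phi_le (n q : ℕ) (hn : 3 ≤ n) (hq : 2 ≤ q) : Phi n q ≤ n * PhiStar n q := by
  have hpos := phi_pos n q hq
  set g := Nat.gcd (Phi n q) n with hg
  obtain ⟨D, hD⟩ : g ∣ Phi n q := Nat.gcd_dvd_left _ _
  have hgn : g ≤ n := Nat.le_of_dvd (by omega) (Nat.gcd_dvd_right _ _)
  have hDle : D ≤ PhiStar n q := by
    apply le_csSup
    · exact ⟨Phi n q, fun m hm => Nat.le_of_dvd hpos hm.1⟩
    · refine ⟨⟨g, by rw [hD, mul_comm]⟩, ?_⟩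
      rw [Nat.coprime_prod_right_iff]
      intro k hk
      rw [Finset.mem_Ico] at hk
      apply Nat.Coprime.symm
      apply Nat.coprime_of_dvd
      intro p hp h2 h1
      have hpP : p ∣ Phi n q := hD ▸ h1.mul_left g
      have hpn := dvd_n n q k p hq (by omega) hk.2 hp hpP h2
      have hpg : p ∣ g := Nat.dvd_gcd hpP hpn
      have hsq : p ^ 2 ∣ Phi n q := by
        rw [hD, pow_two]; exact mul_dvd_mul hpg h1
      apply not_sq_dvd n p q hn (by exact_mod_cast hq) hp hpn
      rw [← phi_cast n q hq]
      exact_mod_cast hsq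
  rw [hD]
  exact Nat.mul_le_mul hgn hDle

/-- For all constants `c, k > 0`, the set of pairs `(n, q)` of integers with
`n ≥ 3`, `q ≥ 2` and `Φ*_n(q) ≤ c·n^k` is finite. -/
theorem finite_phiStar_le (c k : ℝ) (hc : 0 < c) (hk : 0 < k) :
    {nq : ℕ × ℕ | 3 ≤ nq.1 ∧ 2 ≤ nq.2 ∧
      (PhiStar nq.1 nq.2 : ℝ) ≤ c * (nq.1 : ℝ) ^ k}.Finite := by
  set K := ⌈k⌉₊ with hK
  set M := 2 * (K + 1) with hM
  obtain ⟨B, hB⟩ := exp_poly (c ^ 2 * 2 ^ M) (2 * M)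
  apply ((Set.finite_Iic (2 * B ^ 2)).prod (Set.finite_Iic ⌈c ^ 2 * ((2 * B ^ 2 : ℕ) : ℝ) ^ M⌉₊)).subset
  rintro ⟨n, q⟩ ⟨hn, hq, h⟩
  simp only at hn hq h
  have hn1 : (1:ℝ) ≤ n := by exact_mod_cast (by omega : 1 ≤ n)
  have hq1 : (2:ℝ) ≤ q := by exact_mod_cast hq
  have h1 : (PhiStar n q : ℝ) ≤ c * (n:ℝ) ^ K := by
    refine h.trans ?_
    rw [← Real.rpow_natCast]
    gcongr
    exact Nat.le_ceil k
  have h2 : (Phi n q : ℝ) ≤ c * (n:ℝ) ^ (K + 1) := by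
    have : (Phi n q : ℝ) ≤ n * PhiStar n q := by exact_mod_cast phi_le n q hn hq
    calc _ ≤ _ := this
      _ ≤ n * (c * (n:ℝ) ^ K) := by gcongr
      _ = _ := by ring
  have h3 : (q:ℝ) ^ n.totient ≤ c ^ 2 * (n:ℝ) ^ M := by
    calc _ ≤ _ := lower n q hn hq
      _ = (Phi n q : ℝ) ^ 2 := by rw [phi_real n q hq]
      _ ≤ (c * (n:ℝ) ^ (K + 1)) ^ 2 := by gcongr
      _ = _ := by rw [mul_pow, ← pow_mul, mul_comm (K + 1) 2]
  have h4 : (n:ℝ) ≤ 2 * (n.totient:ℝ) ^ 2 := by exact_mod_cast tot_bound n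
  have hsB : n.totient ≤ B := by
    apply hB
    calc (2:ℝ) ^ n.totient ≤ (q:ℝ) ^ n.totient := by gcongr
      _ ≤ _ := h3
      _ ≤ c ^ 2 * (2 * (n.totient:ℝ) ^ 2) ^ M := by gcongr
      _ = _ := by rw [mul_pow, ← pow_mul, mul_assoc]
  have hnB : n ≤ 2 * B ^ 2 := (tot_bound n).trans (by gcongr)
  refine ⟨hnB, ?_⟩
  have hnB' : (n:ℝ) ≤ ((2 * B ^ 2 : ℕ) : ℝ) := by exact_mod_cast hnB
  have h5 : (q:ℝ) ≤ c ^ 2 * ((2 * B ^ 2 : ℕ) : ℝ) ^ M := by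
    calc (q:ℝ) ≤ (q:ℝ) ^ n.totient :=
          le_self_pow₀ (by linarith) (Nat.totient_pos.2 (by omega)).ne'
      _ ≤ _ := h3
      _ ≤ _ := by gcongr
  have h6 := h5.trans (Nat.le_ceil _)
  exact_mod_cast h6
end
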